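/- Let b > 1 and β ∈ (0, 1/2). For almost every pair of phase sequences (Θ, Λ) ∈ [0,1]^ℕ × [0,1]^ℕ (with respect to the infinite product of uniform measures on [0,1]), the Hausdorff dimension of the graph G(f_{Θ,Λ}) = {(t, f_{Θ,Λ}(t)) : t ∈ [0,1]} ⊂ ℝ³ equals 3 − 2β. -/

import Mathlib

open MeasureTheory

/-- First coordinate of the random vector-valued Weierstrass function
`t ↦ ∑ b^{-βn} cos(2π(bⁿ t + θₙ))`. -/
noncomputable def W1 (b β : ℝ) (Θ : ℕ → ℝ) (t : ℝ) : ℝ :=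
  ∑' n : ℕ, b ^ (-β * (n : ℝ)) * Real.cos (2 * Real.pi * (b ^ n * t + Θ n))

/-- Second coordinate of the random vector-valued Weierstrass function
`t ↦ ∑ b^{-βn} sin(2π(bⁿ t + λₙ))`. -/
noncomputable def W2 (b β : ℝ) (Λ : ℕ → ℝ) (t : ℝ) : ℝ :=
  ∑' n : ℕ, b ^ (-β * (n : ℝ)) * Real.sin (2 * Real.pi * (b ^ n * t + Λ n))

/-- Euclidean distance `|f_{Θ,Λ}(x) - f_{Θ,Λ}(y)|` in ℝ². -/
noncomputable def Wdist (b β : ℝ) (Θ Λ : ℕ → ℝ) (x y : ℝ) : ℝ :=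
  Real.sqrt ((W1 b β Θ x - W1 b β Θ y) ^ 2 + (W2 b β Λ x - W2 b β Λ y) ^ 2)

/-- The graph `G(f_{Θ,Λ}) = {(t, f_{Θ,Λ}(t)) : t ∈ [0,1]}` inside ℝ³ = ℝ × ℝ². -/
def Wgraph (b β : ℝ) (Θ Λ : ℕ → ℝ) : Set (ℝ × ℝ × ℝ) :=
  {p | ∃ t ∈ Set.Icc (0 : ℝ) 1, p = (t, W1 b β Θ t, W2 b β Λ t)}

/-- `μ` is the infinite product over `ℕ` of the uniform probability measures on `[0,1]`:
the measure of every measurable cylinder is the corresponding finite product of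
uniform measures. -/
def IsUniformProductMeasure (μ : Measure (ℕ → ℝ)) : Prop :=
  ∀ (t : Finset ℕ) (s : ℕ → Set ℝ), (∀ i, MeasurableSet (s i)) →
    μ {f : ℕ → ℝ | ∀ i ∈ t, f i ∈ s i} =
      ∏ i ∈ t, (volume.restrict (Set.Icc (0 : ℝ) 1)) (s i)

/-!
Each coordinate is `γ`-Hölder for every `γ < β`, and covering the graph over an interval of length
`ε` by boxes of side `ε` gives the upper bound `1 + d (1 - β)` in `ℝ × ℝᵈ`.

For the lower bound we show that the expected Riesz `s`-energy of the graph measure is finite for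
every `s < 1 + d (1 - β)`. This needs a small ball estimate: if `h = |x - y|`, then about `k` phases
`θᵢ` have scale `bⁱ` comparable to `1 / h`, and resampling one of them moves the increment
`W(x) - W(y)` along a sine wave of amplitude at least `c hᵝ`. The increment can concentrate only
where all `k` of the corresponding cosines are smaller than some `δ`, an event of probability
`O(δᵏ)`; optimizing in `δ` gives `P(|W(x) - W(y)| ≤ r) ≤ D (r / hᵝ) ^ (k / (k + 1))`. Taking the
product over the `d` independent coordinates and integrating over `h ≤ r` gives
`P(dist ≤ r) ≤ C r ^ (1 + d (1 - β) k / (k + 1))`, and `k` is arbitrary.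
-/

open Set Filter Topology
open scoped ENNReal NNReal

/-! ### Box counting for graphs of Hölder functions -/

theorem dimH_le_of_card_mul_rpow_le {X : Type*} [EMetricSpace X] {A : Set X} {s C : ℝ}
    (hs : 0 ≤ s) {κ : ℕ → Type*} [∀ n, Finite (κ n)] {ε : ℕ → ℝ} (hε_pos : ∀ n, 0 < ε n)
    (hε : Tendsto ε atTop (𝓝 0)) {T : ∀ n, κ n → Set X}
    (hT : ∀ n i, Metric.ediam (T n i) ≤ ENNReal.ofReal (ε n)) (hA : ∀ n, A ⊆ ⋃ i, T n i)
    (hC : ∀ n, Nat.card (κ n) * ε n ^ s ≤ C) : dimH A ≤ ENNReal.ofReal s := by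
  borelize X
  have (n : ℕ) : Fintype (κ n) := .ofFinite _
  have sum_le (n : ℕ) : ∑ i, Metric.ediam (T n i) ^ s ≤ ENNReal.ofReal C := calc
    ∑ i, Metric.ediam (T n i) ^ s ≤ ∑ _i : κ n, ENNReal.ofReal (ε n) ^ s :=
      Finset.sum_le_sum fun i _ => ENNReal.rpow_le_rpow (hT n i) hs
    _ = ENNReal.ofReal (Nat.card (κ n) * ε n ^ s) := by
      rw [Finset.sum_const, Finset.card_univ, ← Nat.card_eq_fintype_card, nsmul_eq_mul,
        ENNReal.ofReal_rpow_of_pos (hε_pos n), ENNReal.ofReal_mul (Nat.cast_nonneg _),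
        ENNReal.ofReal_natCast]
    _ ≤ ENNReal.ofReal C := ENNReal.ofReal_le_ofReal (hC n)
  have hausdorff_le : μH[s] A ≤ ENNReal.ofReal C := by
    refine (Measure.hausdorffMeasure_le_liminf_sum (l := atTop) s A
      (fun n => ENNReal.ofReal (ε n)) ?_ T (.of_forall hT) (.of_forall hA)).trans ?_
    · simpa using ENNReal.tendsto_ofReal hε
    · exact liminf_le_of_frequently_le' (Frequently.of_forall sum_le)
  refine dimH_le_of_hausdorffMeasure_ne_top (d := s.toNNReal) ?_
  rw [Real.coe_toNNReal s hs]
  exact ne_top_of_le_ne_top ENNReal.ofReal_ne_top hausdorff_le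

theorem exists_fin_mem_Icc_add_mul {a x ε L : ℝ} (hε : 0 < ε) (hx : x ∈ Icc a (a + L)) :
    ∃ k : Fin (⌊L / ε⌋₊ + 1), x ∈ Icc (a + k * ε) (a + (k + 1) * ε) := by
  have hz : 0 ≤ (x - a) / ε := div_nonneg (by linarith [hx.1]) hε.le
  have hzL : (x - a) / ε ≤ L / ε := by gcongr; linarith [hx.2]
  have hlow := (le_div_iff₀ hε).1 (Nat.floor_le hz)
  have hupp := (div_lt_iff₀ hε).1 (Nat.lt_floor_add_one ((x - a) / ε))
  exact ⟨⟨_, Nat.lt_succ_of_le (Nat.floor_le_floor hzL)⟩, by linarith, by linarith⟩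

section Graph

variable {ι : Type*} [Fintype ι] {f : ℝ → ι → ℝ} {C γ : ℝ≥0}

/-- A cube of side `ε` in `ℝ × ℝ^ι` lying over the `i`-th interval of the `ε`-grid of `ℝ`. The
multi-index `k` gives its vertical position relative to the point `f (i * ε) - L`. -/
def graphBox (f : ℝ → ι → ℝ) (ε L : ℝ) (i : ℕ) (k : ι → ℕ) : Set (ℝ × (ι → ℝ)) :=
  Icc (i * ε) ((i + 1) * ε) ×ˢ
    univ.pi fun j => Icc (f (i * ε) j - L + k j * ε) (f (i * ε) j - L + (k j + 1) * ε)

theorem ediam_graphBox_le (f : ℝ → ι → ℝ) (ε L : ℝ) (i : ℕ) (k : ι → ℕ) :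
    Metric.ediam (graphBox f ε L i k) ≤ ENNReal.ofReal ε := by
  have side_le (a m : ℝ) : Metric.ediam (Icc (a + m * ε) (a + (m + 1) * ε)) ≤ ENNReal.ofReal ε := by
    rw [Real.ediam_Icc]
    exact ENNReal.ofReal_le_ofReal (by linarith)
  have base_le : Metric.ediam (Icc (i * ε) ((i + 1) * ε)) ≤ ENNReal.ofReal ε := by
    simpa only [zero_add] using side_le 0 i
  refine Metric.ediam_le fun p hp q hq => max_le ?_ (edist_pi_le_iff.2 fun j => ?_)
  · exact (Metric.edist_le_ediam_of_mem hp.1 hq.1).trans base_le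
  · exact (Metric.edist_le_ediam_of_mem (hp.2 j trivial) (hq.2 j trivial)).trans (side_le _ _)

theorem graph_subset_iUnion_graphBox (hf : HolderOnWith C γ f (Icc 0 1)) {ε : ℝ} (hε : 0 < ε) :
    (fun t => (t, f t)) '' Icc 0 1 ⊆
      ⋃ i : Fin (⌊1 / ε⌋₊ + 1) × (ι → Fin (⌊2 * (C * ε ^ (γ : ℝ)) / ε⌋₊ + 1)),
        graphBox f ε (C * ε ^ (γ : ℝ)) i.1 fun j => i.2 j := by
  rintro _ ⟨t, ht, rfl⟩
  obtain ⟨i, hi⟩ := exists_fin_mem_Icc_add_mul (a := 0) (L := 1) hε (by rwa [zero_add])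
  simp only [zero_add] at hi
  have hiε : (i * ε : ℝ) ∈ Icc 0 1 := ⟨by positivity, hi.1.trans ht.2⟩
  have dist_le : dist (f t) (f (i * ε)) ≤ C * ε ^ (γ : ℝ) := by
    refine hf.dist_le_of_le ht hiε ?_
    rw [Real.dist_eq, abs_of_nonneg (by linarith [hi.1])]
    linarith [hi.2]
  have exists_row (j : ι) : ∃ k : Fin (⌊2 * (C * ε ^ (γ : ℝ)) / ε⌋₊ + 1),
      f t j ∈ Icc (f (i * ε) j - C * ε ^ (γ : ℝ) + k * ε)
        (f (i * ε) j - C * ε ^ (γ : ℝ) + (k + 1) * ε) := by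
    have := abs_le.1 ((dist_le_pi_dist (f t) (f (i * ε)) j).trans dist_le)
    exact exists_fin_mem_Icc_add_mul hε ⟨by linarith, by linarith⟩
  choose k hk using exists_row
  exact mem_iUnion.2 ⟨(i, k), hi, fun j _ => hk j⟩

theorem card_graphBox_mul_rpow_le (ι : Type*) [Fintype ι] (C : ℝ≥0) (hγ : γ ≤ 1) {ε : ℝ}
    (hε : 0 < ε) (hε1 : ε ≤ 1) :
    (Nat.card (Fin (⌊1 / ε⌋₊ + 1) × (ι → Fin (⌊2 * (C * ε ^ (γ : ℝ)) / ε⌋₊ + 1))) : ℝ) *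
      ε ^ (1 + Fintype.card ι * (1 - γ) : ℝ) ≤ 2 * (2 * C + 1) ^ Fintype.card ι := by
  set d := Fintype.card ι
  have columns_le : (⌊1 / ε⌋₊ + 1 : ℝ) * ε ≤ 2 := by
    have := (le_div_iff₀ hε).1 (Nat.floor_le (by positivity : 0 ≤ 1 / ε))
    linarith
  have rows_le : (⌊2 * (C * ε ^ (γ : ℝ)) / ε⌋₊ + 1 : ℝ) * ε ^ (1 - γ : ℝ) ≤ 2 * C + 1 := by
    have hfloor := Nat.floor_le (by positivity : 0 ≤ 2 * (C * ε ^ (γ : ℝ)) / ε)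
    have hcancel : 2 * (C * ε ^ (γ : ℝ)) / ε * ε ^ (1 - γ : ℝ) = 2 * C := by
      rw [Real.rpow_sub hε, Real.rpow_one]
      field_simp
    have hone : ε ^ (1 - γ : ℝ) ≤ 1 :=
      Real.rpow_le_one hε.le hε1 (sub_nonneg.2 (by exact_mod_cast hγ))
    have := mul_le_mul_of_nonneg_right hfloor (by positivity : 0 ≤ ε ^ (1 - γ : ℝ))
    linarith
  have hpow : ε ^ (1 + d * (1 - γ) : ℝ) = ε * (ε ^ (1 - γ : ℝ)) ^ d := by
    rw [Real.rpow_add hε, Real.rpow_one, mul_comm (d : ℝ), Real.rpow_mul_natCast hε.le]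
  rw [hpow, Nat.card_prod, Nat.card_fun, Nat.card_fin, Nat.card_fin, Nat.card_eq_fintype_card]
  push_cast
  rw [mul_mul_mul_comm, ← mul_pow]
  gcongr

theorem dimH_graph_le_of_holderOnWith (hγ : γ ≤ 1) (hf : HolderOnWith C γ f (Icc 0 1)) :
    dimH ((fun t => (t, f t)) '' Icc 0 1) ≤
      ENNReal.ofReal (1 + Fintype.card ι * (1 - γ)) := by
  have hγ' : (0 : ℝ) ≤ 1 - γ := sub_nonneg.2 (by exact_mod_cast hγ)
  have side_pos (n : ℕ) : 0 < 1 / ((n : ℝ) + 1) := Nat.one_div_pos_of_nat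
  have side_le (n : ℕ) : 1 / ((n : ℝ) + 1) ≤ 1 :=
    div_le_one_of_le₀ (by linarith [n.cast_nonneg (α := ℝ)]) (by positivity)
  exact dimH_le_of_card_mul_rpow_le (by positivity) side_pos tendsto_one_div_add_atTop_nhds_zero_nat
    (fun n _ => ediam_graphBox_le f _ _ _ _) (fun n => graph_subset_iUnion_graphBox hf (side_pos n))
    (fun n => card_graphBox_mul_rpow_le ι C hγ (side_pos n) (side_le n))

end Graph

/-! ### The random Weierstrass function and the upper bound -/

theorem holderWith_of_dist_le {X Y : Type*} [PseudoMetricSpace X] [PseudoMetricSpace Y]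
    {f : X → Y} {C γ : ℝ≥0} (h : ∀ x y, dist (f x) (f y) ≤ C * dist x y ^ (γ : ℝ)) :
    HolderWith C γ f := by
  intro x y
  rw [edist_nndist, edist_nndist, ← ENNReal.coe_rpow_of_nonneg _ γ.coe_nonneg, ← ENNReal.coe_mul,
    ENNReal.coe_le_coe]
  exact_mod_cast h x y

theorem holderWith_tsum {α X E : Type*} [PseudoMetricSpace X] [NormedAddCommGroup E]
    {f : α → X → E} {C : α → ℝ≥0} {γ : ℝ≥0} (hC : Summable C) (hf : ∀ n, HolderWith (C n) γ (f n))
    (hsum : ∀ x, Summable fun n => f n x) :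
    HolderWith (∑' n, C n) γ fun x => ∑' n, f n x := by
  refine holderWith_of_dist_le fun x y => ?_
  rw [dist_eq_norm, ← (hsum x).tsum_sub (hsum y)]
  refine tsum_of_norm_bounded ((NNReal.hasSum_coe.2 hC.hasSum).mul_right _) fun n => ?_
  rw [← dist_eq_norm]
  exact (hf n).dist_le x y

theorem holderWith_cos {γ : ℝ≥0} (hγ : γ ≤ 1) : HolderWith 2 γ Real.cos := by
  have bounded : HolderWith 2 0 Real.cos := holderWith_of_dist_le fun x y => by
    rw [NNReal.coe_zero, Real.rpow_zero, mul_one, Real.dist_eq, NNReal.coe_ofNat, abs_le]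
    constructor <;> linarith [x.cos_le_one, x.neg_one_le_cos, y.cos_le_one, y.neg_one_le_cos]
  simpa using bounded.of_le_of_le Real.lipschitzWith_cos.holderWith zero_le hγ

/-- The real-valued random Weierstrass series `∑ b^{-βn} cos (2π (bⁿ t + θₙ + ψ))`. The phase shift
`ψ` gives the cosine series for `ψ = 0` and the sine series for `ψ = -1/4`. -/
noncomputable def weierstrass (b β ψ : ℝ) (Θ : ℕ → ℝ) (t : ℝ) : ℝ :=
  ∑' n : ℕ, b ^ (-β * n) * Real.cos (2 * Real.pi * (b ^ n * t + Θ n + ψ))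

theorem W1_eq_weierstrass (b β : ℝ) : W1 b β = weierstrass b β 0 := by
  ext Θ t
  simp only [W1, weierstrass, add_zero]

theorem W2_eq_weierstrass (b β : ℝ) : W2 b β = weierstrass b β (-1 / 4) := by
  ext Θ t
  refine tsum_congr fun n => ?_
  rw [← Real.cos_sub_pi_div_two]
  ring_nf

section Weierstrass

variable {b β : ℝ}

theorem summable_rpow_neg_mul_natCast (hb : 1 < b) (hβ : 0 < β) :
    Summable fun n : ℕ => b ^ (-β * n) := by
  simp_rw [Real.rpow_mul_natCast (zero_le_one.trans hb.le)]
  exact summable_geometric_of_lt_one (by positivity)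
    (Real.rpow_lt_one_of_one_lt_of_neg hb (by linarith))

theorem norm_rpow_mul_cos_le (hb : 1 < b) (s x : ℝ) : ‖b ^ s * Real.cos x‖ ≤ b ^ s := by
  have : 0 ≤ b ^ s := by positivity
  rw [norm_mul, Real.norm_of_nonneg this]
  exact mul_le_of_le_one_right this (Real.abs_cos_le_one _)

theorem summable_weierstrass (hb : 1 < b) (hβ : 0 < β) (ψ : ℝ) (Θ : ℕ → ℝ) (t : ℝ) :
    Summable fun n : ℕ => b ^ (-β * n) * Real.cos (2 * Real.pi * (b ^ n * t + Θ n + ψ)) :=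
  .of_norm_bounded (summable_rpow_neg_mul_natCast hb hβ) fun _ => norm_rpow_mul_cos_le hb _ _

theorem continuous_weierstrass (hb : 1 < b) (hβ : 0 < β) (ψ : ℝ) :
    Continuous fun q : (ℕ → ℝ) × ℝ => weierstrass b β ψ q.1 q.2 :=
  continuous_tsum (fun n => by fun_prop) (summable_rpow_neg_mul_natCast hb hβ)
    fun _ _ => norm_rpow_mul_cos_le hb _ _

theorem measurable_weierstrass_left (hb : 1 < b) (hβ : 0 < β) (ψ t : ℝ) :
    Measurable fun Θ => weierstrass b β ψ Θ t :=
  ((continuous_weierstrass hb hβ ψ).comp (Continuous.prodMk_left t)).measurable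

theorem holderWith_weierstrass_term (hb : 1 < b) (β ψ θ : ℝ) {γ : ℝ≥0} (hγ : γ ≤ 1) (n : ℕ) :
    HolderWith (2 * (2 * Real.pi).toNNReal ^ (γ : ℝ) * (b ^ (-(β - γ) * n)).toNNReal) γ
      fun t => b ^ (-β * n) * Real.cos (2 * Real.pi * (b ^ n * t + θ + ψ)) := by
  have hb0 : 0 < b := zero_lt_one.trans hb
  refine holderWith_of_dist_le fun s t => ?_
  have hcos := (holderWith_cos hγ).dist_le (2 * Real.pi * (b ^ n * s + θ + ψ))
    (2 * Real.pi * (b ^ n * t + θ + ψ))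
  have hdist : dist (2 * Real.pi * (b ^ n * s + θ + ψ)) (2 * Real.pi * (b ^ n * t + θ + ψ)) =
      2 * Real.pi * b ^ n * dist s t := by
    rw [Real.dist_eq, Real.dist_eq, ← abs_of_pos (by positivity : 0 < 2 * Real.pi * b ^ n),
      ← abs_mul]
    ring_nf
  have hpow : b ^ (-(β - γ) * n) = b ^ (-β * n) * (b ^ n) ^ (γ : ℝ) := by
    rw [← Real.rpow_natCast, ← Real.rpow_mul hb0.le, ← Real.rpow_add hb0]
    ring_nf
  rw [hdist, Real.mul_rpow (by positivity) dist_nonneg,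
    Real.mul_rpow (by positivity) (by positivity)] at hcos
  rw [Real.dist_eq, ← mul_sub, abs_mul, abs_of_pos (by positivity), ← Real.dist_eq]
  refine (mul_le_mul_of_nonneg_left hcos (by positivity)).trans_eq ?_
  push_cast
  rw [Real.coe_toNNReal _ (by positivity), Real.coe_toNNReal _ (by positivity), hpow]
  ring

theorem exists_holderWith_weierstrass (hb : 1 < b) {γ : ℝ≥0} (hγ : γ ≤ 1) (hγβ : γ < β) :
    ∃ C : ℝ≥0, ∀ ψ Θ, HolderWith C γ (weierstrass b β ψ Θ) := by
  have hβ : 0 < β := γ.coe_nonneg.trans_lt hγβ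
  have hC := (summable_rpow_neg_mul_natCast hb (sub_pos.2 hγβ)).toNNReal.mul_left
    (2 * (2 * Real.pi).toNNReal ^ (γ : ℝ))
  exact ⟨_, fun ψ Θ => holderWith_tsum hC (fun n => holderWith_weierstrass_term hb β ψ (Θ n) hγ n)
    (summable_weierstrass hb hβ ψ Θ)⟩

end Weierstrass

/-- The parametrization `t ↦ (t, f t)` of the graph of the random Weierstrass function
`f : ℝ → ℝ^ι` whose `i`-th coordinate is `weierstrass b β (ψ i) (Θ i)`. -/
noncomputable def weierstrassGraphMap {ι : Type*} (b β : ℝ) (ψ : ι → ℝ) (Θ : ι → ℕ → ℝ) (t : ℝ) :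
    ℝ × (ι → ℝ) :=
  (t, fun i => weierstrass b β (ψ i) (Θ i) t)

theorem continuous_weierstrassGraphMap {ι : Type*} {b β : ℝ} (hb : 1 < b) (hβ : 0 < β)
    (ψ : ι → ℝ) :
    Continuous fun q : (ι → ℕ → ℝ) × ℝ => weierstrassGraphMap b β ψ q.1 q.2 :=
  continuous_snd.prodMk <| continuous_pi fun i =>
    (continuous_weierstrass hb hβ (ψ i)).comp (f := fun q : (ι → ℕ → ℝ) × ℝ => (q.1 i, q.2))
      (by fun_prop)

theorem dimH_weierstrassGraphMap_le {ι : Type*} [Fintype ι] {b β : ℝ} (hb : 1 < b) (hβ0 : 0 < β)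
    (hβ1 : β ≤ 1) (ψ : ι → ℝ) (Θ : ι → ℕ → ℝ) :
    dimH (weierstrassGraphMap b β ψ Θ '' Icc 0 1) ≤
      ENNReal.ofReal (1 + Fintype.card ι * (1 - β)) := by
  have le_of_lt {γ : ℝ} (hγ : γ ∈ Ioo 0 β) :
      dimH (weierstrassGraphMap b β ψ Θ '' Icc 0 1) ≤
        ENNReal.ofReal (1 + Fintype.card ι * (1 - γ)) := by
    lift γ to ℝ≥0 using hγ.1.le
    have hγ1 : γ ≤ 1 := by exact_mod_cast hγ.2.le.trans hβ1
    obtain ⟨C, hC⟩ := exists_holderWith_weierstrass hb hγ1 hγ.2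
    have hf : HolderWith C γ fun t i => weierstrass b β (ψ i) (Θ i) t :=
      fun s t => edist_pi_le_iff.2 fun i => hC (ψ i) (Θ i) s t
    exact dimH_graph_le_of_holderOnWith hγ1 (hf.holderOnWith _)
  have tendsto_bound : Tendsto (fun γ : ℝ => ENNReal.ofReal (1 + Fintype.card ι * (1 - γ))) (𝓝[<] β)
      (𝓝 (ENNReal.ofReal (1 + Fintype.card ι * (1 - β)))) :=
    ENNReal.tendsto_ofReal ((Continuous.tendsto (by fun_prop) β).mono_left nhdsWithin_le_nhds)
  exact ge_of_tendsto tendsto_bound (by filter_upwards [Ioo_mem_nhdsLT hβ0] using fun γ => le_of_lt)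

/-! ### Sublevel sets of trigonometric functions -/

theorem volume_le_card_mul_of_mapsTo {α : Type*} {E : Set ℝ} {κ : ℝ → α} {S : Finset α} {d : ℝ}
    (hκ : MapsTo κ E S) (h : ∀ u ∈ E, ∀ v ∈ E, κ u = κ v → |u - v| ≤ d) :
    volume E ≤ S.card * ENNReal.ofReal d := calc
  volume E ≤ volume (⋃ j ∈ S, {u ∈ E | κ u = j}) :=
    measure_mono fun u hu => mem_biUnion (hκ hu) ⟨hu, rfl⟩
  _ ≤ ∑ j ∈ S, volume {u ∈ E | κ u = j} := measure_biUnion_finset_le _ _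
  _ ≤ ∑ _j ∈ S, ENNReal.ofReal d := by
    refine Finset.sum_le_sum fun j _ => (Real.volume_le_diam _).trans (Metric.ediam_le ?_)
    rintro u ⟨hu, hj⟩ v ⟨hv, rfl⟩
    rw [edist_dist, Real.dist_eq]
    exact ENNReal.ofReal_le_ofReal (h u hu v hv hj)
  _ = S.card * ENNReal.ofReal d := by rw [Finset.sum_const, nsmul_eq_mul]

/-- The representative of the angle `2πθ` modulo `π` in `[-π/2, π/2]`. -/
noncomputable def halfPeriodRep (θ : ℝ) : ℝ := Real.pi * (2 * θ - round (2 * θ))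

theorem halfPeriodRep_mem_Icc (θ : ℝ) :
    halfPeriodRep θ ∈ Icc (-(Real.pi / 2)) (Real.pi / 2) := by
  have := abs_le.1 (abs_sub_round (2 * θ))
  constructor <;> rw [halfPeriodRep] <;> nlinarith [Real.pi_pos]

theorem two_pi_mul_eq_halfPeriodRep_add (θ : ℝ) :
    2 * Real.pi * θ = halfPeriodRep θ + round (2 * θ) * Real.pi := by
  rw [halfPeriodRep]
  ring

theorem sin_two_pi_mul (θ : ℝ) :
    Real.sin (2 * Real.pi * θ) = (-1) ^ round (2 * θ) * Real.sin (halfPeriodRep θ) := by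
  rw [two_pi_mul_eq_halfPeriodRep_add, Real.sin_add_int_mul_pi]

theorem abs_cos_two_pi_mul (θ : ℝ) :
    |Real.cos (2 * Real.pi * θ)| = Real.cos (halfPeriodRep θ) := by
  rw [two_pi_mul_eq_halfPeriodRep_add, Real.cos_add_int_mul_pi, abs_mul, abs_neg_one_zpow, one_mul,
    abs_of_nonneg (Real.cos_nonneg_of_mem_Icc (halfPeriodRep_mem_Icc θ))]

theorem abs_halfPeriodRep_sub {θ φ : ℝ} (h : round (2 * θ) = round (2 * φ)) :
    |halfPeriodRep θ - halfPeriodRep φ| = 2 * Real.pi * |θ - φ| := by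
  have : halfPeriodRep θ - halfPeriodRep φ = 2 * Real.pi * (θ - φ) := by
    rw [halfPeriodRep, halfPeriodRep, h]
    ring
  rw [this, abs_mul, abs_of_pos Real.two_pi_pos]

theorem volume_le_of_halfPeriodRep {E : Set ℝ} (hE : E ⊆ Icc 0 1) {m d : ℝ}
    (h : ∀ u ∈ E, ∀ v ∈ E, round (2 * (u + m)) = round (2 * (v + m)) →
      |halfPeriodRep (u + m) - halfPeriodRep (v + m)| ≤ 2 * Real.pi * d) :
    volume E ≤ 3 * ENNReal.ofReal d := by
  have mapsTo : MapsTo (fun u => round (2 * (u + m))) E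
      (Finset.Icc (round (2 * m)) (round (2 * m) + 2)) := fun u hu => by
    have := hE hu
    rw [Finset.coe_Icc, ← round_add_ofNat]
    simp only [round_eq]
    constructor <;> refine Int.floor_le_floor ?_ <;> norm_num <;> linarith [this.1, this.2]
  have three_pieces := volume_le_card_mul_of_mapsTo mapsTo (d := d) fun u hu v hv huv => by
    have := h u hu v hv huv
    rw [abs_halfPeriodRep_sub huv, add_sub_add_right_eq_sub] at this
    exact le_of_mul_le_mul_left this Real.two_pi_pos
  have card_eq : (Finset.Icc (round (2 * m)) (round (2 * m) + 2)).card = 3 := by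
    rw [Int.card_Icc]
    omega
  simpa only [card_eq, Nat.cast_ofNat] using three_pieces

theorem volume_abs_sin_lt_le (m δ : ℝ) :
    volume ({u | |Real.sin (2 * Real.pi * (u + m))| < δ} ∩ Icc 0 1) ≤ 3 * ENNReal.ofReal δ := by
  refine volume_le_of_halfPeriodRep inter_subset_right (m := m) fun u hu v hv _ => ?_
  have abs_rep_le {w : ℝ} (hw : |Real.sin (2 * Real.pi * (w + m))| < δ) :
      |halfPeriodRep (w + m)| ≤ Real.pi * δ := by
    rw [sin_two_pi_mul, abs_mul, abs_neg_one_zpow, one_mul] at hw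
    have := (Real.mul_abs_le_abs_sin (abs_le.2 (halfPeriodRep_mem_Icc _))).trans hw.le
    rw [div_mul_eq_mul_div, div_le_iff₀ Real.pi_pos] at this
    linarith [abs_nonneg (halfPeriodRep (w + m))]
  linarith [abs_sub (halfPeriodRep (u + m)) (halfPeriodRep (v + m)), abs_rep_le hu.1,
    abs_rep_le hv.1]

theorem volume_abs_cos_lt_le (m δ : ℝ) :
    volume ({u | |Real.cos (2 * Real.pi * (u + m))| < δ} ∩ Icc 0 1) ≤ 3 * ENNReal.ofReal δ := by
  have cos_eq (u : ℝ) :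
      Real.cos (2 * Real.pi * (u + m)) = Real.sin (2 * Real.pi * (u + (m + 1 / 4))) := by
    rw [← Real.sin_add_pi_div_two]
    ring_nf
  simpa only [cos_eq] using volume_abs_sin_lt_le (m + 1 / 4) δ

theorem mul_abs_sub_le_abs_sin_sub_sin {x y δ : ℝ} (hx : x ∈ Icc (-(Real.pi / 2)) (Real.pi / 2))
    (hy : y ∈ Icc (-(Real.pi / 2)) (Real.pi / 2)) (hδ : 0 ≤ δ) (hxδ : δ ≤ Real.cos x)
    (hyδ : δ ≤ Real.cos y) :
    2 / Real.pi * (δ * |x - y|) ≤ |Real.sin x - Real.sin y| := by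
  have cos_mid : δ ≤ Real.cos ((x + y) / 2) := by
    have hnonneg : 0 ≤ Real.cos ((x + y) / 2) :=
      Real.cos_nonneg_of_mem_Icc ⟨by linarith [hx.1, hy.1], by linarith [hx.2, hy.2]⟩
    nlinarith [Real.cos_add_cos x y, Real.cos_le_one ((x - y) / 2)]
  have sin_half : 2 / Real.pi * |(x - y) / 2| ≤ |Real.sin ((x - y) / 2)| :=
    Real.mul_abs_le_abs_sin (abs_le.2 ⟨by linarith [hx.1, hy.2], by linarith [hx.2, hy.1]⟩)
  calc 2 / Real.pi * (δ * |x - y|) = 2 * (2 / Real.pi * |(x - y) / 2|) * δ := by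
        rw [abs_div, abs_two]
        ring
    _ ≤ 2 * |Real.sin ((x - y) / 2)| * Real.cos ((x + y) / 2) := by gcongr
    _ = |Real.sin x - Real.sin y| := by
        rw [Real.sin_sub_sin, abs_mul, abs_mul, abs_two, abs_of_nonneg (hδ.trans cos_mid)]

theorem volume_abs_add_mul_sin_le_le {a δ : ℝ} (c m r : ℝ) (ha : a ≠ 0) (hδ : 0 < δ) :
    volume ({u | |c + a * Real.sin (2 * Real.pi * (u + m))| ≤ r ∧
      δ ≤ |Real.cos (2 * Real.pi * (u + m))|} ∩ Icc 0 1) ≤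
      3 * ENNReal.ofReal (r / (|a| * δ)) := by
  refine volume_le_of_halfPeriodRep inter_subset_right (m := m) ?_
  rintro u ⟨⟨hu, huδ⟩, -⟩ v ⟨⟨hv, hvδ⟩, -⟩ huv
  rw [abs_cos_two_pi_mul] at huδ hvδ
  rw [sin_two_pi_mul] at hu hv
  rw [huv] at hu
  set x := halfPeriodRep (u + m)
  set y := halfPeriodRep (v + m)
  set σ : ℝ := (-1) ^ round (2 * (v + m))
  have sin_sub_le : |a| * |Real.sin x - Real.sin y| ≤ 2 * r := calc
    |a| * |Real.sin x - Real.sin y|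
        = |(c + a * (σ * Real.sin x)) - (c + a * (σ * Real.sin y))| := by
      rw [add_sub_add_left_eq_sub, ← mul_sub, ← mul_sub, abs_mul, abs_mul, abs_neg_one_zpow,
        one_mul]
    _ ≤ 2 * r := by linarith [abs_sub (c + a * (σ * Real.sin x)) (c + a * (σ * Real.sin y))]
  have sub_le := mul_le_mul_of_nonneg_left (mul_abs_sub_le_abs_sin_sub_sin
    (halfPeriodRep_mem_Icc _) (halfPeriodRep_mem_Icc _) hδ.le huδ hvδ) (abs_nonneg a)
  calc |x - y| = Real.pi / 2 * (|a| * (2 / Real.pi * (δ * |x - y|))) / (|a| * δ) := by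
        have : |a| ≠ 0 := abs_ne_zero.2 ha
        field_simp
    _ ≤ Real.pi / 2 * (2 * r) / (|a| * δ) := by
        gcongr Real.pi / 2 * ?_ / (|a| * δ)
        exact sub_le.trans sin_sub_le
    _ ≤ 2 * Real.pi * (r / (|a| * δ)) := by
        have hr : 0 ≤ r := (abs_nonneg _).trans hu
        have : 0 ≤ Real.pi * (r / (|a| * δ)) := by positivity
        rw [mul_div_assoc, mul_div_assoc]
        linarith

/-! ### Small ball estimates under independent uniform phases -/

theorem infinitePi_prod_map_update {κ : Type*} [DecidableEq κ] {X : κ → Type*}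
    [∀ i, MeasurableSpace (X i)] (P : ∀ i, Measure (X i)) [∀ i, IsProbabilityMeasure (P i)]
    (i : κ) :
    ((Measure.infinitePi P).prod (P i)).map (fun p => Function.update p.1 i p.2) =
      Measure.infinitePi P := by
  refine Measure.eq_infinitePi P fun s t ht => ?_
  rw [Measure.map_apply measurable_update' (.pi s.countable_toSet fun j _ => ht j)]
  have preimage_eq : (fun p : (∀ j, X j) × X i => Function.update p.1 i p.2) ⁻¹' (s : Set κ).pi t =
      ((s.erase i : Finset κ) : Set κ).pi t ×ˢ {u | i ∈ s → u ∈ t i} := by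
    ext ⟨f, u⟩
    simp only [mem_preimage, Set.mem_pi, mem_prod, mem_ofPred_eq, Finset.mem_erase, Finset.mem_coe]
    refine ⟨fun h => ⟨fun j hj => ?_, fun hi => ?_⟩, fun h j hj => ?_⟩
    · simpa only [Function.update_of_ne hj.1] using h j hj.2
    · simpa only [Function.update_self] using h i hi
    · rcases eq_or_ne j i with rfl | hji
      · simpa only [Function.update_self] using h.2 hj
      · simpa only [Function.update_of_ne hji] using h.1 j ⟨hji, hj⟩
  rw [preimage_eq, Measure.prod_prod, Measure.infinitePi_pi P fun j _ => ht j]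
  by_cases hi : i ∈ s
  · simp only [hi, true_imp_iff, ofPred_mem_eq]
    exact Finset.prod_erase_mul s (fun j => P j (t j)) hi
  · simp only [hi, false_imp_iff, ofPred_true, measure_univ, mul_one, Finset.erase_eq_of_notMem hi]

theorem infinitePi_le_of_forall_update_le {κ : Type*} [DecidableEq κ] {X : κ → Type*}
    [∀ i, MeasurableSpace (X i)] {P : ∀ i, Measure (X i)} [∀ i, IsProbabilityMeasure (P i)]
    {E : Set (∀ i, X i)} (hE : MeasurableSet E) (i : κ) {c : ℝ≥0∞}
    (h : ∀ f, P i {u | Function.update f i u ∈ E} ≤ c) : Measure.infinitePi P E ≤ c := by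
  rw [← infinitePi_prod_map_update P i, Measure.map_apply measurable_update' hE,
    Measure.prod_apply (measurable_update' hE)]
  refine (lintegral_mono h).trans ?_
  rw [lintegral_const, measure_univ, mul_one]

/-- The uniform probability measure on `[0, 1]`, as a measure on `ℝ`. -/
noncomputable def uniformIcc : Measure ℝ := volume.restrict (Icc 0 1)

instance : IsProbabilityMeasure uniformIcc :=
  ⟨by rw [uniformIcc, Measure.restrict_apply_univ, Real.volume_Icc, sub_zero, ENNReal.ofReal_one]⟩

/-- The law of a family of independent phases, each uniform on `[0, 1]`. -/
noncomputable def uniformPhases (κ : Type*) : Measure (κ → ℝ) :=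
  Measure.infinitePi fun _ => uniformIcc

instance (κ : Type*) : IsProbabilityMeasure (uniformPhases κ) :=
  inferInstanceAs (IsProbabilityMeasure (Measure.infinitePi _))

theorem IsUniformProductMeasure.eq_uniformPhases {μ : Measure (ℕ → ℝ)}
    (hμ : IsUniformProductMeasure μ) : μ = uniformPhases ℕ :=
  Measure.eq_infinitePi _ fun s t ht => hμ s t ht

section SmallBall

variable {κ : Type*}

theorem uniformPhases_forall_abs_cos_lt_le (S : Finset κ) (m : κ → ℝ) (δ : ℝ) :
    uniformPhases κ {f | ∀ i ∈ S, |Real.cos (2 * Real.pi * (f i + m i))| < δ} ≤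
      (3 * ENNReal.ofReal δ) ^ S.card := by
  have factor_measurable (i : κ) :
      MeasurableSet {u | |Real.cos (2 * Real.pi * (u + m i))| < δ} :=
    measurableSet_lt (by fun_prop) measurable_const
  calc uniformPhases κ {f | ∀ i ∈ S, |Real.cos (2 * Real.pi * (f i + m i))| < δ}
      = ∏ i ∈ S, uniformIcc {u | |Real.cos (2 * Real.pi * (u + m i))| < δ} :=
        Measure.infinitePi_pi (fun _ => uniformIcc) fun i _ => factor_measurable i
    _ ≤ (3 * ENNReal.ofReal δ) ^ S.card := Finset.prod_le_pow_card _ _ _ fun i _ => by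
        rw [uniformIcc, Measure.restrict_apply (factor_measurable i)]
        exact volume_abs_cos_lt_le (m i) δ

variable [DecidableEq κ] {X : (κ → ℝ) → ℝ} {S : Finset κ} {a m : κ → ℝ} {A δ r : ℝ}

theorem uniformPhases_abs_le_and_le_abs_cos_le (hX : Measurable X) (hA : 0 < A) (hδ : 0 < δ)
    (hr : 0 ≤ r) {i : κ} {a m : ℝ} (ha : A ≤ |a|)
    (h : ∀ f, ∃ c, ∀ u, X (Function.update f i u) = c + a * Real.sin (2 * Real.pi * (u + m))) :
    uniformPhases κ {f | |X f| ≤ r ∧ δ ≤ |Real.cos (2 * Real.pi * (f i + m))|} ≤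
      3 * ENNReal.ofReal (r / (A * δ)) := by
  have cos_measurable : Measurable fun f : κ → ℝ => |Real.cos (2 * Real.pi * (f i + m))| := by
    fun_prop
  refine infinitePi_le_of_forall_update_le ?_ i fun f => ?_
  · exact (measurableSet_le hX.abs measurable_const).inter
      (measurableSet_le measurable_const cos_measurable)
  · obtain ⟨c, hc⟩ := h f
    simp only [mem_ofPred_eq, hc, Function.update_self]
    rw [uniformIcc, Measure.restrict_apply' measurableSet_Icc]
    refine (volume_abs_add_mul_sin_le_le c m r (abs_pos.1 (hA.trans_le ha)) hδ).trans ?_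
    gcongr

-- If `|X|` is small, then either some coordinate in `S` with nondegenerate derivative (`|cos| ≥ δ`)
-- lies in a small set, or all of them are simultaneously within `O(δ)` of a critical point.
theorem uniformPhases_abs_le_le (hX : Measurable X) (hA : 0 < A) (hδ : 0 < δ) (hr : 0 ≤ r)
    (ha : ∀ i ∈ S, A ≤ |a i|)
    (h : ∀ i ∈ S, ∀ f, ∃ c, ∀ u,
      X (Function.update f i u) = c + a i * Real.sin (2 * Real.pi * (u + m i))) :
    uniformPhases κ {f | |X f| ≤ r} ≤
      S.card * (3 * ENNReal.ofReal (r / (A * δ))) + (3 * ENNReal.ofReal δ) ^ S.card := by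
  have cover : {f | |X f| ≤ r} ⊆
      (⋃ i ∈ S, {f | |X f| ≤ r ∧ δ ≤ |Real.cos (2 * Real.pi * (f i + m i))|}) ∪
        {f | ∀ i ∈ S, |Real.cos (2 * Real.pi * (f i + m i))| < δ} := by
    intro f hf
    by_contra! hcon
    simp only [mem_union, mem_iUnion, mem_ofPred_eq, not_or, not_exists, not_and, not_le] at hcon
    exact hcon.2 fun i hi => hcon.1 i hi hf
  refine (measure_mono cover).trans ((measure_union_le _ _).trans (add_le_add ?_
    (uniformPhases_forall_abs_cos_lt_le S m δ)))
  rw [← nsmul_eq_mul]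
  exact (measure_biUnion_finset_le _ _).trans <| Finset.sum_le_card_nsmul _ _ _ fun i hi =>
    uniformPhases_abs_le_and_le_abs_cos_le hX hA hδ hr (ha i hi) (h i hi)

theorem uniformPhases_abs_le_le_rpow (hX : Measurable X) (hA : 0 < A) (hr : 0 < r)
    (ha : ∀ i ∈ S, A ≤ |a i|)
    (h : ∀ i ∈ S, ∀ f, ∃ c, ∀ u,
      X (Function.update f i u) = c + a i * Real.sin (2 * Real.pi * (u + m i))) :
    uniformPhases κ {f | |X f| ≤ r} ≤ ENNReal.ofReal
      ((3 * S.card + 3 ^ S.card) * (r / A) ^ (S.card / (S.card + 1) : ℝ)) := by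
  set k := S.card
  have hrA : 0 < r / A := div_pos hr hA
  -- `δ = (r / A) ^ (1 / (k + 1))` balances the two terms of the bound.
  set δ := (r / A) ^ (1 / (k + 1) : ℝ)
  have hδ : 0 < δ := by positivity
  have ratio_eq : r / (A * δ) = (r / A) ^ (k / (k + 1) : ℝ) := by
    have : (k / (k + 1) : ℝ) = 1 - 1 / (k + 1) := by
      field_simp
      ring
    rw [this, Real.rpow_sub hrA, Real.rpow_one, div_div]
  have pow_eq : δ ^ k = (r / A) ^ (k / (k + 1) : ℝ) := by
    rw [← Real.rpow_mul_natCast hrA.le, one_div_mul_eq_div]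
  refine (uniformPhases_abs_le_le hX hA hδ hr.le ha h).trans_eq ?_
  rw [mul_pow, ← ENNReal.ofReal_pow hδ.le, ratio_eq, pow_eq, ENNReal.ofReal_mul (by positivity),
    ENNReal.ofReal_add (by positivity) (by positivity), ENNReal.ofReal_mul (by positivity),
    ENNReal.ofReal_pow (by positivity), ENNReal.ofReal_ofNat, ENNReal.ofReal_natCast]
  ring

end SmallBall

theorem exists_finset_card_eq_forall_pow_mul_mem_Icc {b h : ℝ} (hb : 1 < b) (hh : 0 < h) (k : ℕ)
    (hle : h ≤ 1 / (2 * b ^ k)) :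
    ∃ S : Finset ℕ, S.card = k ∧ ∀ i ∈ S, b ^ i * h ∈ Icc (1 / (2 * b ^ k)) (1 / 2) := by
  have hb0 : 0 < b := zero_lt_one.trans hb
  have hk : b ^ k ≤ 1 / (2 * h) := by
    rw [le_div_iff₀ (by positivity)] at hle ⊢
    linarith
  obtain ⟨N, hN_le, hN_lt⟩ := exists_nat_pow_near ((one_le_pow₀ hb.le).trans hk) hb
  have hkN : k ≤ N := Nat.lt_succ_iff.1 ((pow_lt_pow_iff_right₀ hb).1 (hk.trans_lt hN_lt))
  rw [le_div_iff₀ (by positivity)] at hN_le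
  rw [div_lt_iff₀ (by positivity)] at hN_lt
  refine ⟨Finset.Ioc (N - k) N, by rw [Nat.card_Ioc]; omega, fun i hi => ?_⟩
  rw [Finset.mem_Ioc] at hi
  constructor
  · have : b ^ (N + 1) ≤ b ^ i * b ^ k := by
      rw [← pow_add]
      exact pow_le_pow_right₀ hb.le (by omega)
    rw [div_le_iff₀ (by positivity)]
    nlinarith
  · nlinarith [pow_le_pow_right₀ hb.le hi.2]

section WeierstrassSmallBall

variable {b β : ℝ}

theorem exists_weierstrass_update_eq (hb : 1 < b) (hβ : 0 < β) (ψ : ℝ) (Θ : ℕ → ℝ) (t : ℝ)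
    (i : ℕ) :
    ∃ c, ∀ u, weierstrass b β ψ (Function.update Θ i u) t =
      c + b ^ (-β * i) * Real.cos (2 * Real.pi * (b ^ i * t + u + ψ)) := by
  refine ⟨∑' n : ℕ, if n = i then 0 else
    b ^ (-β * n) * Real.cos (2 * Real.pi * (b ^ n * t + Θ n + ψ)), fun u => ?_⟩
  rw [weierstrass, (summable_weierstrass hb hβ ψ _ t).tsum_eq_add_tsum_ite i, add_comm,
    Function.update_self]
  congr 1
  refine tsum_congr fun n => ?_
  split_ifs with hn
  · rfl
  · rw [Function.update_of_ne hn]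

theorem exists_weierstrass_update_sub_eq (hb : 1 < b) (hβ : 0 < β) (ψ x y : ℝ) (i : ℕ)
    (Θ : ℕ → ℝ) :
    ∃ c, ∀ u, weierstrass b β ψ (Function.update Θ i u) x -
        weierstrass b β ψ (Function.update Θ i u) y =
      c + -2 * b ^ (-β * i) * Real.sin (Real.pi * (b ^ i * (x - y))) *
        Real.sin (2 * Real.pi * (u + (b ^ i * (x + y) / 2 + ψ))) := by
  obtain ⟨c, hc⟩ := exists_weierstrass_update_eq hb hβ ψ Θ x i
  obtain ⟨c', hc'⟩ := exists_weierstrass_update_eq hb hβ ψ Θ y i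
  refine ⟨c - c', fun u => ?_⟩
  rw [hc, hc', add_sub_add_comm, ← mul_sub, Real.cos_sub_cos]
  ring_nf

theorem two_div_pow_mul_rpow_le_abs_amplitude (hb : 1 < b) (hβ : 0 < β) {x y : ℝ} {i k : ℕ}
    (hi : b ^ i * |x - y| ∈ Icc (1 / (2 * b ^ k)) (1 / 2)) :
    2 / b ^ k * |x - y| ^ β ≤ |-2 * b ^ (-β * i) * Real.sin (Real.pi * (b ^ i * (x - y)))| := by
  have hb0 : 0 < b := zero_lt_one.trans hb
  have hpi := Real.pi_pos
  have abs_arg : |Real.pi * (b ^ i * (x - y))| = Real.pi * (b ^ i * |x - y|) := by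
    rw [abs_mul, abs_mul, abs_of_pos hpi, abs_of_pos (pow_pos hb0 i)]
  have sin_ge : 1 / b ^ k ≤ |Real.sin (Real.pi * (b ^ i * (x - y)))| := calc
    1 / b ^ k = 2 * (1 / (2 * b ^ k)) := by field_simp
    _ ≤ 2 * (b ^ i * |x - y|) := by linarith [hi.1]
    _ = 2 / Real.pi * |Real.pi * (b ^ i * (x - y))| := by
      rw [abs_arg]
      field_simp
    _ ≤ |Real.sin (Real.pi * (b ^ i * (x - y)))| :=
      Real.mul_abs_le_abs_sin (by rw [abs_arg]; nlinarith [hi.2])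
  have rpow_le : |x - y| ^ β ≤ b ^ (-β * i) := by
    have : b ^ (-β * i) = ((b ^ i)⁻¹) ^ β := by
      rw [← Real.rpow_natCast, ← Real.rpow_neg hb0.le, ← Real.rpow_mul hb0.le]
      ring_nf
    rw [this]
    refine Real.rpow_le_rpow (abs_nonneg _) ?_ hβ.le
    rw [← one_div, le_div_iff₀ (pow_pos hb0 i)]
    linarith [hi.2]
  calc 2 / b ^ k * |x - y| ^ β = 2 * |x - y| ^ β * (1 / b ^ k) := by ring
    _ ≤ 2 * b ^ (-β * i) * |Real.sin (Real.pi * (b ^ i * (x - y)))| := by gcongr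
    _ = |-2 * b ^ (-β * i) * Real.sin (Real.pi * (b ^ i * (x - y)))| := by
      rw [abs_mul, abs_mul, abs_neg, abs_two, abs_of_pos (by positivity : 0 < b ^ (-β * i))]

theorem exists_uniformPhases_abs_weierstrass_sub_le_le (hb : 1 < b) (hβ : 0 < β) (k : ℕ) :
    ∃ D : ℝ, 0 < D ∧ ∀ ψ x y r : ℝ, x ≠ y → |x - y| ≤ 1 / (2 * b ^ k) → 0 < r →
      uniformPhases ℕ {Θ | |weierstrass b β ψ Θ x - weierstrass b β ψ Θ y| ≤ r} ≤
        ENNReal.ofReal (D * (r / |x - y| ^ β) ^ (k / (k + 1) : ℝ)) := by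
  have : 0 < b := zero_lt_one.trans hb
  refine ⟨(3 * k + 3 ^ k) * (b ^ k / 2) ^ (k / (k + 1) : ℝ), by positivity,
    fun ψ x y r hxy hle hr => ?_⟩
  have hpos : 0 < |x - y| := abs_pos.2 (sub_ne_zero.2 hxy)
  obtain ⟨S, rfl, hS⟩ := exists_finset_card_eq_forall_pow_mul_mem_Icc hb hpos k hle
  refine (uniformPhases_abs_le_le_rpow ((measurable_weierstrass_left hb hβ ψ x).sub
    (measurable_weierstrass_left hb hβ ψ y)) (by positivity) hr
    (a := fun i : ℕ => -2 * b ^ (-β * i) * Real.sin (Real.pi * (b ^ i * (x - y))))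
    (m := fun i : ℕ => b ^ i * (x + y) / 2 + ψ)
    (fun i hi => two_div_pow_mul_rpow_le_abs_amplitude hb hβ (hS i hi))
    fun i _ => exists_weierstrass_update_sub_eq hb hβ ψ x y i).trans_eq ?_
  rw [mul_assoc, ← Real.mul_rpow (by positivity) (by positivity)]
  congr 3
  field_simp

end WeierstrassSmallBall

/-! ### Riesz energies and the dimension of random images -/

section RieszEnergy

variable {X : Type*} [EMetricSpace X] [MeasurableSpace X] {η : Measure X} {s : ℝ}

theorem le_dimH_of_measure_inter_le [BorelSpace X] {A : Set X} {C : ℝ≥0∞} (hC : C ≠ ⊤)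
    (hA : η A ≠ 0) (h : ∀ S : Set X, IsClosed S → η (S ∩ A) ≤ C * Metric.ediam S ^ s) :
    ENNReal.ofReal s ≤ dimH A := by
  rcases le_or_gt s 0 with hs | hs
  · rw [ENNReal.ofReal_of_nonpos hs]
    exact zero_le
  have restrict_le : C⁻¹ • η.restrict A ≤ μH[s] := by
    refine Measure.le_hausdorffMeasure s _ 1 one_pos fun S _ => ?_
    rw [Measure.smul_apply, smul_eq_mul]
    calc C⁻¹ * η.restrict A S ≤ C⁻¹ * (C * Metric.ediam S ^ s) := by
          gcongr
          refine (measure_mono subset_closure).trans ?_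
          rw [Measure.restrict_apply measurableSet_closure, ← Metric.ediam_closure S]
          exact h _ isClosed_closure
      _ ≤ Metric.ediam S ^ s := by
          rw [← mul_assoc]
          exact mul_le_of_le_one_left' (ENNReal.inv_mul_le_one C)
  refine le_dimH_of_hausdorffMeasure_ne_zero (d := s.toNNReal) fun h0 => ?_
  rw [Real.coe_toNNReal _ hs.le] at h0
  have := nonpos_iff_eq_zero.1 ((restrict_le A).trans h0.le)
  rw [Measure.smul_apply, Measure.restrict_apply_self, smul_eq_mul, mul_eq_zero,
    ENNReal.inv_eq_zero] at this
  exact this.elim hC hA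

/-- The Riesz `s`-energy `∬ d(x, y)⁻ˢ dη(x) dη(y)` of a measure. The integrand is `⊤` on the
diagonal when `0 < s`. -/
noncomputable def rieszEnergy (s : ℝ) (η : Measure X) : ℝ≥0∞ :=
  ∫⁻ x, ∫⁻ y, edist x y ^ (-s) ∂η ∂η

theorem measure_le_mul_ediam_rpow_of_mem {S : Set X} (hS : MeasurableSet S) (hs : 0 < s) {x : X}
    (hx : x ∈ S) {M : ℝ≥0∞} (hM : M ≠ ⊤) (h : ∫⁻ y, edist x y ^ (-s) ∂η < M) :
    η S ≤ M * Metric.ediam S ^ s := by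
  rw [← ENNReal.div_le_iff_le_mul (.inr hM) (.inr (zero_le.trans_lt h).ne'), div_eq_mul_inv,
    ← ENNReal.rpow_neg, mul_comm]
  calc Metric.ediam S ^ (-s) * η S = ∫⁻ _ in S, Metric.ediam S ^ (-s) ∂η :=
        (setLIntegral_const _ _).symm
    _ ≤ ∫⁻ y in S, edist x y ^ (-s) ∂η := setLIntegral_mono' hS fun y hy => by
        rw [ENNReal.rpow_neg, ENNReal.rpow_neg]
        gcongr
        exact Metric.edist_le_ediam_of_mem hx hy
    _ ≤ ∫⁻ y, edist x y ^ (-s) ∂η := setLIntegral_le_lintegral _ _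
    _ ≤ M := h.le

theorem rieszEnergy_map [BorelSpace X] [SecondCountableTopology X] {Y : Type*}
    [MeasurableSpace Y] {ν : Measure Y} [SFinite ν] {f : Y → X} (hf : Measurable f) (s : ℝ) :
    rieszEnergy s (ν.map f) = ∫⁻ z, edist (f z.1) (f z.2) ^ (-s) ∂(ν.prod ν) := by
  rw [rieszEnergy, lintegral_prod _ (by fun_prop), lintegral_map
    (Measurable.lintegral_prod_right' (f := fun p : X × X => edist p.1 p.2 ^ (-s)) (by fun_prop))
    hf]
  exact lintegral_congr fun x => lintegral_map (by fun_prop) hf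

theorem le_dimH_of_rieszEnergy_ne_top [BorelSpace X] [SecondCountableTopology X] [SFinite η]
    (hs : 0 < s) (hη : rieszEnergy s η ≠ ⊤) {T : Set X} (hT : η T ≠ 0) :
    ENNReal.ofReal s ≤ dimH T := by
  have potential_measurable : Measurable fun x => ∫⁻ y, edist x y ^ (-s) ∂η :=
    Measurable.lintegral_prod_right' (f := fun p : X × X => edist p.1 p.2 ^ (-s)) (by fun_prop)
  let A (M : ℕ) : Set X := T ∩ {x | ∫⁻ y, edist x y ^ (-s) ∂η < M}
  obtain ⟨M, hM⟩ : ∃ M, η (A M) ≠ 0 := by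
    by_contra! hA
    refine hT (measure_mono_null (t := (⋃ M, A M) ∪ {x | ¬ ∫⁻ y, edist x y ^ (-s) ∂η < ⊤})
      (fun x hx => ?_) (measure_union_null (measure_iUnion_null hA)
        (ae_lt_top potential_measurable hη)))
    rw [mem_union, mem_iUnion, mem_ofPred_eq, or_iff_not_imp_right, not_not]
    intro hfin
    obtain ⟨M, hM⟩ := ENNReal.exists_nat_gt hfin.ne
    exact ⟨M, hx, hM⟩
  refine (le_dimH_of_measure_inter_le (ENNReal.natCast_ne_top M) hM fun S hS => ?_).trans
    (dimH_mono inter_subset_left)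
  rcases (S ∩ A M).eq_empty_or_nonempty with hempty | ⟨x, hxS, -, hxM⟩
  · rw [hempty, measure_empty]
    exact zero_le
  · exact (measure_mono inter_subset_left).trans
      (measure_le_mul_ediam_rpow_of_mem hS.measurableSet hs hxS (ENNReal.natCast_ne_top M) hxM)

end RieszEnergy

theorem ennreal_rpow_neg_le_one_add_tsum {s : ℝ} (hs : 0 < s) (z : ℝ≥0∞) :
    z ^ (-s) ≤ 1 + ∑' j : ℕ, (Iic (ENNReal.ofReal ((1 / 2) ^ j))).indicator
      (fun _ => ENNReal.ofReal (((1 / 2 : ℝ) ^ (j + 1)) ^ (-s))) z := by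
  rcases le_or_gt 1 z with hz1 | hz1
  · exact (ENNReal.rpow_le_one_of_one_le_of_neg hz1 (by linarith)).trans le_self_add
  refine le_add_left ?_
  lift z to ℝ≥0 using hz1.ne_top
  rcases eq_zero_or_pos z with rfl | hz0
  · refine le_top.trans_eq (ENNReal.tsum_const_eq_top_of_ne_zero one_ne_zero).symm |>.trans
      (ENNReal.tsum_le_tsum fun j => ?_)
    rw [indicator_of_mem (by simp), ENNReal.one_le_ofReal]
    exact Real.one_le_rpow_of_pos_of_le_one_of_nonpos (by positivity)
      (pow_le_one₀ (by norm_num) (by norm_num)) (by linarith)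
  · obtain ⟨j, hj_lt, hj_le⟩ := exists_nat_pow_near_of_lt_one (y := (1 / 2 : ℝ))
      (NNReal.coe_pos.2 hz0) (by exact_mod_cast hz1.le) (by norm_num) (by norm_num)
    refine le_trans ?_ (ENNReal.le_tsum j)
    rw [← ENNReal.ofReal_coe_nnreal, ENNReal.ofReal_rpow_of_pos (NNReal.coe_pos.2 hz0),
      indicator_of_mem (mem_Iic.2 (ENNReal.ofReal_le_ofReal hj_le))]
    exact ENNReal.ofReal_le_ofReal
      (Real.rpow_le_rpow_of_nonpos (by positivity) hj_lt.le (by linarith))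

theorem lintegral_rpow_neg_ne_top {Ω : Type*} [MeasurableSpace Ω] {ρ : Measure Ω}
    [IsFiniteMeasure ρ] {Z : Ω → ℝ≥0∞} (hZ : Measurable Z) {C s t : ℝ} (hs : 0 < s) (hst : s < t)
    (h : ∀ r : ℝ, 0 < r → ρ {ω | Z ω ≤ ENNReal.ofReal r} ≤ ENNReal.ofReal (C * r ^ t)) :
    ∫⁻ ω, Z ω ^ (-s) ∂ρ ≠ ⊤ := by
  have level_measurable (j : ℕ) : MeasurableSet (Z ⁻¹' Iic (ENNReal.ofReal ((1 / 2) ^ j))) :=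
    hZ measurableSet_Iic
  have term_eq (j : ℕ) : ((1 / 2 : ℝ) ^ (j + 1)) ^ (-s) * (C * ((1 / 2) ^ j) ^ t) =
      C * (1 / 2) ^ (-s) * ((1 / 2) ^ (t - s)) ^ j := by
    have half_pos : (0 : ℝ) < 1 / 2 := by norm_num
    rw [pow_succ, Real.mul_rpow (by positivity) half_pos.le, ← Real.rpow_natCast _ j,
      ← Real.rpow_natCast _ j, ← Real.rpow_mul half_pos.le, ← Real.rpow_mul half_pos.le,
      ← Real.rpow_mul half_pos.le, show (t - s) * j = j * -s + j * t by ring,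
      Real.rpow_add half_pos]
    ring
  have summable_bound : Summable fun j : ℕ => C * (1 / 2) ^ (-s) * ((1 / 2 : ℝ) ^ (t - s)) ^ j :=
    (summable_geometric_of_lt_one (by positivity)
      (Real.rpow_lt_one (by norm_num) (by norm_num) (by linarith))).mul_left _
  refine ne_top_of_le_ne_top (ENNReal.add_ne_top.2
    ⟨measure_ne_top ρ univ, summable_bound.tsum_ofReal_ne_top⟩) ?_
  calc ∫⁻ ω, Z ω ^ (-s) ∂ρ
      ≤ ∫⁻ ω, (1 + ∑' j : ℕ, (Z ⁻¹' Iic (ENNReal.ofReal ((1 / 2) ^ j))).indicator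
          (fun _ => ENNReal.ofReal (((1 / 2 : ℝ) ^ (j + 1)) ^ (-s))) ω) ∂ρ :=
        lintegral_mono fun ω => ennreal_rpow_neg_le_one_add_tsum hs (Z ω)
    _ = ρ univ + ∑' j : ℕ, ENNReal.ofReal (((1 / 2 : ℝ) ^ (j + 1)) ^ (-s)) *
          ρ (Z ⁻¹' Iic (ENNReal.ofReal ((1 / 2) ^ j))) := by
        rw [lintegral_add_left measurable_const, lintegral_one, lintegral_tsum fun j =>
          (measurable_const.indicator (level_measurable j)).aemeasurable]
        simp_rw [lintegral_indicator_const (level_measurable _)]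
    _ ≤ ρ univ + ∑' j : ℕ, ENNReal.ofReal (C * (1 / 2) ^ (-s) * ((1 / 2) ^ (t - s)) ^ j) := by
        gcongr with j
        rw [← term_eq, ENNReal.ofReal_mul (by positivity)]
        gcongr
        exact h _ (by positivity)

theorem ae_le_dimH_image_of_measure_edist_le_le {Ω Y X : Type*} [MeasurableSpace Ω]
    [MeasurableSpace Y] [EMetricSpace X] [SecondCountableTopology X] [MeasurableSpace X]
    [BorelSpace X] {P : Measure Ω} [IsFiniteMeasure P] {ν : Measure Y} [IsFiniteMeasure ν]
    {F : Ω → Y → X} (hF : Measurable fun q : Ω × Y => F q.1 q.2) {T : Set Y} (hT : ν T ≠ 0)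
    {C s t : ℝ} (hs : 0 < s) (hst : s < t)
    (h : ∀ r : ℝ, 0 < r → (P.prod (ν.prod ν))
      {q | edist (F q.1 q.2.1) (F q.1 q.2.2) ≤ ENNReal.ofReal r} ≤ ENNReal.ofReal (C * r ^ t)) :
    ∀ᵐ ω ∂P, ENNReal.ofReal s ≤ dimH (F ω '' T) := by
  have edist_measurable : Measurable fun q : Ω × Y × Y => edist (F q.1 q.2.1) (F q.1 q.2.2) :=
    (hF.comp (measurable_fst.prodMk measurable_snd.fst)).edist
      (hF.comp (measurable_fst.prodMk measurable_snd.snd))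
  have kernel_measurable :
      Measurable fun q : Ω × Y × Y => edist (F q.1 q.2.1) (F q.1 q.2.2) ^ (-s) :=
    edist_measurable.pow_const _
  have expected_energy_ne_top := lintegral_rpow_neg_ne_top edist_measurable hs hst h
  rw [lintegral_prod _ kernel_measurable.aemeasurable] at expected_energy_ne_top
  filter_upwards [ae_lt_top kernel_measurable.lintegral_prod_right' expected_energy_ne_top]
    with ω hω
  have hFω : Measurable (F ω) := hF.comp measurable_prodMk_left
  exact le_dimH_of_rieszEnergy_ne_top hs ((rieszEnergy_map hFω s).trans_ne hω.ne)
    (ne_bot_of_le_ne_bot hT ((measure_mono (subset_preimage_image _ _)).trans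
      (Measure.le_map_apply hFω.aemeasurable _)))

/-! ### The lower bound -/

theorem lintegral_Icc_rpow_neg {r q : ℝ} (hr : 0 ≤ r) (hq : q < 1) :
    ∫⁻ z in Icc 0 r, ENNReal.ofReal (z ^ (-q)) = ENNReal.ofReal (r ^ (1 - q) / (1 - q)) := by
  have integrable : IntegrableOn (fun z : ℝ => z ^ (-q)) (Ioc 0 r) := by
    rw [← intervalIntegrable_iff_integrableOn_Ioc_of_le hr]
    exact intervalIntegral.intervalIntegrable_rpow' (by linarith)
  rw [setLIntegral_congr Ioc_ae_eq_Icc.symm, ← ofReal_integral_eq_lintegral_ofReal integrable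
    ((ae_restrict_mem measurableSet_Ioc).mono fun z hz => Real.rpow_nonneg hz.1.le _),
    ← intervalIntegral.integral_of_le hr, integral_rpow (.inl (by linarith)), neg_add_eq_sub,
    Real.zero_rpow (by linarith), sub_zero]

theorem lintegral_closedBall_rpow_neg_le (x : ℝ) {r q : ℝ} (hr : 0 ≤ r) (hq : q < 1) :
    ∫⁻ y in Metric.closedBall x r, ENNReal.ofReal (|x - y| ^ (-q)) ≤
      ENNReal.ofReal (2 * (r ^ (1 - q) / (1 - q))) := by
  let g : ℝ → ℝ≥0∞ := (Icc 0 r).indicator fun z => ENNReal.ofReal (z ^ (-q))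
  have g_of_mem {z : ℝ} (h0 : 0 ≤ z) (hz : z ≤ r) : g z = ENNReal.ofReal (z ^ (-q)) :=
    indicator_of_mem (mem_Icc.2 ⟨h0, hz⟩) _
  have hg : Measurable g := Measurable.indicator (by fun_prop) measurableSet_Icc
  have lintegral_g : ∫⁻ z, g z = ENNReal.ofReal (r ^ (1 - q) / (1 - q)) := by
    rw [lintegral_indicator measurableSet_Icc, lintegral_Icc_rpow_neg hr hq]
  have le_g (y : ℝ) : (Metric.closedBall x r).indicator
      (fun y => ENNReal.ofReal (|x - y| ^ (-q))) y ≤ g (x - y) + g (y - x) := by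
    refine indicator_apply_le' (fun hy => ?_) fun _ => zero_le
    rw [mem_closedBall_iff_norm', Real.norm_eq_abs] at hy
    rcases le_total y x with hyx | hxy
    · rw [abs_of_nonneg (sub_nonneg.2 hyx)] at hy ⊢
      exact le_add_right (g_of_mem (sub_nonneg.2 hyx) hy).ge
    · rw [abs_of_nonpos (sub_nonpos.2 hxy), neg_sub] at hy ⊢
      exact le_add_left (g_of_mem (sub_nonneg.2 hxy) hy).ge
  calc ∫⁻ y in Metric.closedBall x r, ENNReal.ofReal (|x - y| ^ (-q))
      = ∫⁻ y, (Metric.closedBall x r).indicator (fun y => ENNReal.ofReal (|x - y| ^ (-q))) y :=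
        (lintegral_indicator Metric.isClosed_closedBall.measurableSet _).symm
    _ ≤ ∫⁻ y, (g (x - y) + g (y - x)) := lintegral_mono le_g
    _ = ENNReal.ofReal (2 * (r ^ (1 - q) / (1 - q))) := by
      rw [lintegral_add_left (by fun_prop), lintegral_sub_left_eq_self,
        lintegral_sub_right_eq_self, lintegral_g, two_mul,
        ENNReal.ofReal_add (by bound) (by bound)]

theorem lintegral_Icc_lintegral_Icc_le {φ : ℝ → ℝ → ℝ≥0∞} {A : ℝ≥0∞} (hA : A ≠ ⊤) {L r q : ℝ}
    (hr : 0 ≤ r) (hq : q < 1)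
    (h : ∀ x y, x ≠ y → |x - y| ≤ L → φ x y ≤
      A * (Metric.closedBall x r).indicator (fun y => ENNReal.ofReal (|x - y| ^ (-q))) y) :
    ∫⁻ x in Icc 0 L, ∫⁻ y in Icc 0 L, φ x y ≤
      A * ENNReal.ofReal (2 * (r ^ (1 - q) / (1 - q))) * ENNReal.ofReal L := by
  have inner_le (x : ℝ) (hx : x ∈ Icc 0 L) : ∫⁻ y in Icc 0 L, φ x y ≤
      A * ENNReal.ofReal (2 * (r ^ (1 - q) / (1 - q))) := calc
    ∫⁻ y in Icc 0 L, φ x y ≤ ∫⁻ y in Icc 0 L,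
        A * (Metric.closedBall x r).indicator (fun y => ENNReal.ofReal (|x - y| ^ (-q))) y := by
      refine lintegral_mono_ae ?_
      filter_upwards [ae_restrict_mem measurableSet_Icc,
        ae_restrict_of_ae (Measure.ae_ne volume x)] with y hy hyx
      refine h x y hyx.symm ?_
      simpa using abs_sub_le_of_le_of_le hx.1 hx.2 hy.1 hy.2
    _ ≤ A * ∫⁻ y in Metric.closedBall x r, ENNReal.ofReal (|x - y| ^ (-q)) := by
      rw [lintegral_const_mul' _ _ hA,
        ← lintegral_indicator Metric.isClosed_closedBall.measurableSet]
      gcongr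
      exact Measure.restrict_le_self
    _ ≤ A * ENNReal.ofReal (2 * (r ^ (1 - q) / (1 - q))) := by
      gcongr
      exact lintegral_closedBall_rpow_neg_le x hr hq
  calc ∫⁻ x in Icc 0 L, ∫⁻ y in Icc 0 L, φ x y
      ≤ ∫⁻ _ in Icc 0 L, A * ENNReal.ofReal (2 * (r ^ (1 - q) / (1 - q))) :=
        setLIntegral_mono' measurableSet_Icc inner_le
    _ = A * ENNReal.ofReal (2 * (r ^ (1 - q) / (1 - q))) * ENNReal.ofReal L := by
        rw [setLIntegral_const, Real.volume_Icc, sub_zero]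

section LowerBound

variable {ι : Type*} [Fintype ι] {b β : ℝ}

theorem setOf_edist_weierstrassGraphMap_le_eq (ψ : ι → ℝ) (x y : ℝ) {r : ℝ} (hr : 0 ≤ r) :
    {Θ | edist (weierstrassGraphMap b β ψ Θ x) (weierstrassGraphMap b β ψ Θ y) ≤
        ENNReal.ofReal r} =
      {_Θ | |x - y| ≤ r} ∩ Set.univ.pi fun i =>
        {Θ | |weierstrass b β (ψ i) Θ x - weierstrass b β (ψ i) Θ y| ≤ r} := by
  ext Θ
  simp only [edist_le_ofReal hr, weierstrassGraphMap, Prod.dist_eq, max_le_iff,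
    dist_pi_le_iff hr, Real.dist_eq, mem_inter_iff, mem_ofPred_eq, Set.mem_pi, mem_univ,
    forall_const]

theorem exists_pi_uniformPhases_edist_weierstrassGraphMap_le_le (hb : 1 < b) (hβ : 0 < β)
    (ψ : ι → ℝ) (k : ℕ) {γ : ℝ} (hγ : γ = k / (k + 1)) :
    ∃ D : ℝ, 0 < D ∧ ∀ x y r : ℝ, x ≠ y → |x - y| ≤ 1 / (2 * b ^ k) → 0 < r →
      (Measure.pi fun _ : ι => uniformPhases ℕ)
        {Θ | edist (weierstrassGraphMap b β ψ Θ x) (weierstrassGraphMap b β ψ Θ y) ≤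
          ENNReal.ofReal r} ≤
      ENNReal.ofReal (D * r ^ (Fintype.card ι * γ)) * (Metric.closedBall x r).indicator
        (fun y => ENNReal.ofReal (|x - y| ^ (-(Fintype.card ι * β * γ)))) y := by
  obtain ⟨D, hD, small_ball⟩ := exists_uniformPhases_abs_weierstrass_sub_le_le hb hβ k
  rw [← hγ] at small_ball
  refine ⟨D ^ Fintype.card ι, by positivity, fun x y r hxy hle hr => ?_⟩
  rw [setOf_edist_weierstrassGraphMap_le_eq ψ x y hr.le]
  by_cases hr_le : |x - y| ≤ r
  · have hpos : 0 < |x - y| := abs_pos.2 (sub_ne_zero.2 hxy)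
    rw [indicator_of_mem (mem_closedBall_iff_norm'.2 hr_le),
      ← ENNReal.ofReal_mul (by positivity)]
    refine (measure_mono inter_subset_right).trans ?_
    rw [Measure.pi_pi]
    refine (Finset.prod_le_pow_card _ _ _ fun i _ =>
      small_ball (ψ i) x y r hxy hle hr).trans_eq ?_
    rw [Finset.card_univ, ← ENNReal.ofReal_pow (by positivity), mul_pow,
      ← Real.rpow_mul_natCast (by positivity), Real.div_rpow hr.le (by positivity),
      ← Real.rpow_mul hpos.le, Real.rpow_neg hpos.le]
    ring_nf
  · simp only [hr_le, ofPred_false, empty_inter, measure_empty, zero_le]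

theorem isClosed_setOf_edist_weierstrassGraphMap_le (hb : 1 < b) (hβ : 0 < β) (ψ : ι → ℝ)
    (r : ℝ≥0∞) :
    IsClosed {q : (ι → ℕ → ℝ) × ℝ × ℝ |
      edist (weierstrassGraphMap b β ψ q.1 q.2.1) (weierstrassGraphMap b β ψ q.1 q.2.2) ≤ r} := by
  have continuous_map := continuous_weierstrassGraphMap hb hβ ψ
  have left_continuous := continuous_map.comp
    (f := fun q : (ι → ℕ → ℝ) × ℝ × ℝ => (q.1, q.2.1)) (by fun_prop)
  have right_continuous := continuous_map.comp
    (f := fun q : (ι → ℕ → ℝ) × ℝ × ℝ => (q.1, q.2.2)) (by fun_prop)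
  exact isClosed_le (left_continuous.edist right_continuous) continuous_const

theorem exists_prod_edist_weierstrassGraphMap_le_le (hb : 1 < b) (hβ : 0 < β)
    (hdβ : Fintype.card ι * β ≤ 1) (ψ : ι → ℝ) (k : ℕ) {ν : Measure ℝ}
    (hν : ν = volume.restrict (Icc 0 (1 / (2 * b ^ k)))) :
    ∃ C : ℝ, ∀ r : ℝ, 0 < r →
      ((Measure.pi fun _ : ι => uniformPhases ℕ).prod (ν.prod ν))
        {q | edist (weierstrassGraphMap b β ψ q.1 q.2.1) (weierstrassGraphMap b β ψ q.1 q.2.2) ≤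
          ENNReal.ofReal r} ≤
      ENNReal.ofReal (C * r ^ (1 + Fintype.card ι * (1 - β) * (k / (k + 1) : ℝ))) := by
  subst hν
  obtain ⟨D, hD, fiber_le⟩ :=
    exists_pi_uniformPhases_edist_weierstrassGraphMap_le_le hb hβ ψ k rfl
  set γ : ℝ := k / (k + 1) with hγ
  set d : ℝ := (Fintype.card ι : ℝ)
  have hγ0 : 0 ≤ γ := by positivity
  have hγ1 : γ < 1 := by rw [hγ, div_lt_one (by positivity)]; linarith
  have hq : d * β * γ < 1 := (mul_le_of_le_one_left hγ0 hdβ).trans_lt hγ1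
  have : 0 < 1 - d * β * γ := by linarith
  have close_measurable (r : ℝ) :=
    (isClosed_setOf_edist_weierstrassGraphMap_le hb hβ ψ (ENNReal.ofReal r)).measurableSet
  refine ⟨D * (2 / (1 - d * β * γ)) * (1 / (2 * b ^ k)), fun r hr => ?_⟩
  rw [Measure.prod_apply_symm (close_measurable r),
    lintegral_prod _ (measurable_measure_prodMk_right (close_measurable r)).aemeasurable]
  refine (lintegral_Icc_lintegral_Icc_le ENNReal.ofReal_ne_top hr.le hq
    fun x y hxy hle => fiber_le x y r hxy hle hr).trans_eq ?_
  rw [← ENNReal.ofReal_mul (by positivity), ← ENNReal.ofReal_mul (by positivity),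
    show 1 + d * (1 - β) * γ = d * γ + (1 - d * β * γ) by ring, Real.rpow_add hr]
  ring_nf

theorem ae_le_dimH_weierstrassGraphMap (hb : 1 < b) (hβ : 0 < β) (hdβ : Fintype.card ι * β ≤ 1)
    (ψ : ι → ℝ) {s : ℝ} (hs : s < 1 + Fintype.card ι * (1 - β)) :
    ∀ᵐ Θ ∂Measure.pi fun _ : ι => uniformPhases ℕ,
      ENNReal.ofReal s ≤ dimH (weierstrassGraphMap b β ψ Θ '' Icc 0 1) := by
  rcases le_or_gt s 0 with hs0 | hs0
  · simp only [ENNReal.ofReal_of_nonpos hs0, zero_le, Filter.eventually_true]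
  have exponent_tendsto : Tendsto (fun k : ℕ => 1 + Fintype.card ι * (1 - β) * (k / (k + 1) : ℝ))
      atTop (𝓝 (1 + Fintype.card ι * (1 - β))) := by
    simpa using ((tendsto_natCast_div_add_atTop (1 : ℝ)).const_mul _).const_add 1
  obtain ⟨k, hk⟩ := (exponent_tendsto.eventually_const_lt hs).exists
  have hbk : 1 ≤ b ^ k := one_le_pow₀ hb.le
  obtain ⟨C, hC⟩ := exists_prod_edist_weierstrassGraphMap_le_le hb hβ hdβ ψ k rfl
  have volume_ne_zero :
      volume.restrict (Icc 0 (1 / (2 * b ^ k))) (Icc 0 (1 / (2 * b ^ k))) ≠ 0 := by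
    rw [Measure.restrict_apply_self, Real.volume_Icc, sub_zero]
    exact (ENNReal.ofReal_pos.2 (by positivity)).ne'
  filter_upwards [ae_le_dimH_image_of_measure_edist_le_le
    (continuous_weierstrassGraphMap hb hβ ψ).measurable volume_ne_zero hs0 hk hC] with Θ hΘ
  refine hΘ.trans (dimH_mono (image_mono (Icc_subset_Icc_right ?_)))
  rw [div_le_one (by positivity)]
  linarith

end LowerBound

/-! ### Graphs of random vector-valued Weierstrass functions -/

theorem dimH_Wgraph_eq (b β : ℝ) (Θ Λ : ℕ → ℝ) :
    dimH (Wgraph b β Θ Λ) =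
      dimH (weierstrassGraphMap b β ![0, -1 / 4] ![Θ, Λ] '' Icc 0 1) := by
  let e := (ContinuousLinearEquiv.refl ℝ ℝ).prodCongr (ContinuousLinearEquiv.finTwoArrow ℝ ℝ)
  rw [← e.dimH_image, image_image, Wgraph, W1_eq_weierstrass, W2_eq_weierstrass]
  congr 1
  ext p
  simp only [mem_ofPred_eq, mem_image, eq_comm (a := p)]
  rfl

theorem stmt_0_general {ι : Type*} [Fintype ι] [Nonempty ι] {b β : ℝ} (hb : 1 < b) (hβ : 0 < β)
    (hdβ : Fintype.card ι * β ≤ 1) (ψ : ι → ℝ) {μ : Measure (ℕ → ℝ)}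
    (hμ : IsUniformProductMeasure μ) :
    ∀ᵐ Θ ∂Measure.pi fun _ : ι => μ,
      dimH (weierstrassGraphMap b β ψ Θ '' Icc 0 1) =
        ENNReal.ofReal (1 + Fintype.card ι * (1 - β)) := by
  rw [hμ.eq_uniformPhases]
  have hβ1 : β ≤ 1 :=
    (le_mul_of_one_le_left hβ.le (by exact_mod_cast Fintype.card_pos)).trans hdβ
  obtain ⟨s, -, s_lt, s_tendsto⟩ :=
    exists_seq_strictMono_tendsto (1 + Fintype.card ι * (1 - β) : ℝ)
  filter_upwards [ae_all_iff.2 fun n => ae_le_dimH_weierstrassGraphMap hb hβ hdβ ψ (s_lt n)]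
    with Θ hΘ
  exact (dimH_weierstrassGraphMap_le hb hβ hβ1 ψ Θ).antisymm
    (le_of_tendsto' (ENNReal.tendsto_ofReal s_tendsto) hΘ)

/-- for a.e. pair of phase sequences, the Hausdorff dimension of the
graph of the random vector-valued Weierstrass function equals `3 - 2β`. -/
theorem stmt_0 (b β : ℝ) (hb : 1 < b) (hβ : β ∈ Set.Ioo (0 : ℝ) (1 / 2))
    (μ : Measure (ℕ → ℝ)) (hμ : IsUniformProductMeasure μ) :
    ∀ᵐ p ∂ μ.prod μ, dimH (Wgraph b β p.1 p.2) = ENNReal.ofReal (3 - 2 * β) := by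
  have : IsProbabilityMeasure μ := hμ.eq_uniformPhases ▸ inferInstance
  have card_mul_le : (Fintype.card (Fin 2) : ℝ) * β ≤ 1 := by
    rw [Fintype.card_fin, Nat.cast_ofNat]
    linarith [hβ.2]
  have exponent_eq : 1 + (Fintype.card (Fin 2) : ℝ) * (1 - β) = 3 - 2 * β := by
    rw [Fintype.card_fin, Nat.cast_ofNat]
    ring
  filter_upwards [(measurePreserving_finTwoArrow μ).symm.quasiMeasurePreserving.ae
    (stmt_0_general hb hβ.1 card_mul_le ![0, -1 / 4] hμ)] with p hp
  rw [dimH_Wgraph_eq, ← exponent_eq]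
  exact hp
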